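/- Let G be a finitely generated virtually free group. Then the set Aut₀(G) = {σ ∈ Aut(G) : σ ∼ id_G} is a subgroup of Aut(G) of finite index. -/

import Mathlib

open FirstOrder Language

/-- Function symbols of the first-order language of groups:
a binary multiplication, a unary inverse and a constant for the identity. -/
inductive GroupFunc : ℕ → Type
  | mul : GroupFunc 2
  | inv : GroupFunc 1
  | one : GroupFunc 0

/-- The first-order language of groups. -/
def groupLang : FirstOrder.Language :=
  { Functions := GroupFunc
    Relations := fun _ => Empty }

/-- Every group is a structure for the language of groups in the natural way. -/
instance groupLangStructure (G : Type*) [Group G] : groupLang.Structure G where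
  funMap {n} f v :=
    match f with
    | .mul => v 0 * v 1
    | .inv => (v 0)⁻¹
    | .one => 1
  RelMap {n} r _ := r.elim

/-- Existential formulas: iterated existential quantifications of a
quantifier-free formula. -/
inductive IsExistentialQF {α : Type*} : ∀ {n : ℕ}, groupLang.BoundedFormula α n → Prop
  | of_isQF {n : ℕ} {φ : groupLang.BoundedFormula α n} (h : φ.IsQF) : IsExistentialQF φ
  | ex {n : ℕ} {φ : groupLang.BoundedFormula α (n + 1)} (h : IsExistentialQF φ) :
      IsExistentialQF φ.ex

/-- Universal formulas: iterated universal quantifications of a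
quantifier-free formula. -/
inductive IsUniversalQF {α : Type*} : ∀ {n : ℕ}, groupLang.BoundedFormula α n → Prop
  | of_isQF {n : ℕ} {φ : groupLang.BoundedFormula α n} (h : φ.IsQF) : IsUniversalQF φ
  | all {n : ℕ} {φ : groupLang.BoundedFormula α (n + 1)} (h : IsUniversalQF φ) :
      IsUniversalQF φ.all

/-- ∀∃-formulas: iterated universal quantifications of an existential formula. -/
inductive IsAE {α : Type*} : ∀ {n : ℕ}, groupLang.BoundedFormula α n → Prop
  | of_existential {n : ℕ} {φ : groupLang.BoundedFormula α n} (h : IsExistentialQF φ) : IsAE φ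
  | all {n : ℕ} {φ : groupLang.BoundedFormula α (n + 1)} (h : IsAE φ) : IsAE φ.all

/-- A group is virtually free if it has a free subgroup of finite index. -/
def VirtuallyFree (G : Type*) [Group G] : Prop :=
  ∃ H : Subgroup G, H.FiniteIndex ∧ Nonempty (IsFreeGroup H)

/-- A group is co-Hopfian if every injective endomorphism is surjective. -/
def CoHopfian (G : Type*) [Group G] : Prop :=
  ∀ φ : G →* G, Function.Injective φ → Function.Surjective φ

/-- Two homomorphisms `φ, φ' : G → G'` are equivalent if they coincide up to
conjugation on every finite subgroup of `G`. -/
def HomEquiv {G G' : Type*} [Group G] [Group G'] (φ φ' : G →* G') : Prop :=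
  ∀ H : Subgroup G, (H : Set G).Finite →
    ∃ g' : G', ∀ h ∈ H, φ' h = g' * φ h * g'⁻¹

/-- Two groups are ∀∃-equivalent if they satisfy the same ∀∃-sentences. -/
def AEEquivalent (G : Type*) (G' : Type*) [Group G] [Group G'] : Prop :=
  ∀ φ : groupLang.Sentence, IsAE φ → (G ⊨ φ ↔ G' ⊨ φ)

/-- Two groups are ∃-equivalent if they satisfy the same existential sentences. -/
def ExistentiallyEquivalent (G : Type*) (G' : Type*) [Group G] [Group G'] : Prop :=
  ∀ φ : groupLang.Sentence, IsExistentialQF φ → (G ⊨ φ ↔ G' ⊨ φ)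

/-- An endomorphism is rigid-testing: `G` is rigid if every endomorphism
equivalent to the identity is an automorphism. -/
def Rigid (G : Type*) [Group G] : Prop :=
  ∀ φ : G →* G, HomEquiv φ (MonoidHom.id G) → Function.Bijective φ

/-- `Out G` is finite, expressed as: the inner automorphisms form a finite index
subgroup of `Aut G`. -/
def OutFinite (G : Type*) [Group G] : Prop :=
  (MulAut.conj : G →* MulAut G).range.FiniteIndex

/-- Iterated composition of an endomorphism. -/
def homPow {G : Type*} [Group G] (φ : G →* G) : ℕ → (G →* G)
  | 0 => MonoidHom.id G
  | n + 1 => φ.comp (homPow φ n)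

/-- An endomorphism `φ` of `G` is class-permuting if some positive power of `φ`
is equivalent to the identity of `G`. -/
def ClassPermuting {G : Type*} [Group G] (φ : G →* G) : Prop :=
  ∃ n : ℕ, 1 ≤ n ∧ HomEquiv (homPow φ n) (MonoidHom.id G)

/-- A maximal finite subgroup: a finite subgroup maximal with respect to
inclusion among finite subgroups. -/
def MaximalFiniteSubgroup {G : Type*} [Group G] (A : Subgroup G) : Prop :=
  (A : Set G).Finite ∧ ∀ B : Subgroup G, (B : Set G).Finite → A ≤ B → A = B

/-- Two subgroups are conjugate. -/
def SubgroupConj {G : Type*} [Group G] (A B : Subgroup G) : Prop :=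
  ∃ g : G, B = A.map (MulAut.conj g).toMonoidHom

/-- A group is strongly co-Hopfian if there is a finite subset `F` of
`G \ {1}` such that every endomorphism whose kernel misses `F` is an
automorphism. -/
def StronglyCoHopfian (G : Type*) [Group G] : Prop :=
  ∃ F : Finset G, (1 : G) ∉ F ∧
    ∀ φ : G →* G, (∀ f ∈ F, φ f ≠ 1) → Function.Bijective φ

/-- A group is finitely presented. -/
def GroupFinitelyPresented (G : Type*) [Group G] : Prop :=
  ∃ (n : ℕ) (rels : Finset (FreeGroup (Fin n))),
    Nonempty (PresentedGroup (rels : Set (FreeGroup (Fin n))) ≃* G)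

/-!
The Cayley graph `Γ` of a finitely generated virtually free group `G` is quasi-isometric to the
Cayley graph of a free group on a basis, which is a tree, so `Γ` has Manning's bottleneck property.
In a bottleneck graph the circumcentres of a finite set are uniformly close to each other. A finite
subgroup `H` acting on `Γ` permutes the circumcentres of an orbit, so it moves such a circumcentre
`c` a bounded amount, which says that `c⁻¹ * H * c` lies in a ball `B` around `1` that does not
depend on `H`. As `B` is finite, only finitely many finite subgroups `K ⊆ B` matter, and for each of
them an automorphism can carry `K` into `B`, up to conjugation, in only finitely many ways.
-/

open SimpleGraph

section CoarseGeometry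

variable {V W : Type*} {Γ : SimpleGraph V} {T : SimpleGraph W}

/-- Manning's bottleneck property, which characterizes quasi-trees: between any two vertices there
is a coarse midpoint `m` whose `Δ`-neighbourhood meets every walk joining them. -/
def HasBottleneck (Γ : SimpleGraph V) (Δ : ℕ) : Prop :=
  ∀ x y, ∃ m, Γ.dist m x ≤ Γ.dist m y + Δ ∧ Γ.dist m y ≤ Γ.dist m x + Δ ∧
    ∀ p : Γ.Walk x y, ∃ v ∈ p.support, Γ.dist m v ≤ Δ

/-- The radius of the smallest ball around `x` containing the finite set `S`. -/
noncomputable def radiusAt (Γ : SimpleGraph V) (S : Finset V) (x : V) : ℕ :=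
  S.sup (Γ.dist x)

/-- `c` is a circumcentre of the finite set `S`: no ball containing `S` is smaller than the smallest
one around `c`. -/
def IsCircumcenter (Γ : SimpleGraph V) (S : Finset V) (c : V) : Prop :=
  ∀ x, radiusAt Γ S c ≤ radiusAt Γ S x

theorem exists_isCircumcenter [Nonempty V] (Γ : SimpleGraph V) (S : Finset V) :
    ∃ c, IsCircumcenter Γ S c :=
  ⟨Function.argmin (radiusAt Γ S), fun x ↦ Function.argmin_le (radiusAt Γ S) x⟩

theorem dist_add_dist_of_mem_support_of_length_eq_dist {u v w : V} {p : Γ.Walk u v}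
    (hp : p.length = Γ.dist u v) (hw : w ∈ p.support) :
    Γ.dist u w + Γ.dist w v = Γ.dist u v := by
  classical
  have hlen : (p.takeUntil w hw).length + (p.dropUntil w hw).length = p.length := by
    rw [← Walk.length_append, Walk.take_spec]
  have htriangle := (p.takeUntil w hw).reachable.dist_triangle_left v
  have htake := dist_le (p.takeUntil w hw)
  have hdrop := dist_le (p.dropUntil w hw)
  omega

theorem dist_le_two_mul_of_geodesic_meets_ball (hΓ : Γ.Connected) {f m v z : V} {Δ : ℕ}
    (hv : Γ.dist f v + Γ.dist v z = Γ.dist f z) (hm : Γ.dist m v ≤ Δ)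
    (hfz : Γ.dist f z ≤ Γ.dist m z) : Γ.dist m f ≤ 2 * Δ := by
  have hmz := hΓ.dist_triangle (u := m) (v := v) (w := z)
  have hmf := hΓ.dist_triangle (u := m) (v := v) (w := f)
  rw [Γ.dist_comm (u := v) (v := f)] at hmf
  omega

theorem HasBottleneck.dist_le_of_isCircumcenter {Δ : ℕ} (hΔ : HasBottleneck Γ Δ)
    (hΓ : Γ.Connected) {S : Finset V} (hS : S.Nonempty) {c c' : V}
    (hc : IsCircumcenter Γ S c) (hc' : IsCircumcenter Γ S c') : Γ.dist c c' ≤ 5 * Δ := by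
  obtain ⟨m, hm, hm', hwalk⟩ := hΔ c c'
  obtain ⟨z, hzS, hz⟩ := S.exists_mem_eq_sup hS (Γ.dist m)
  have hcz : Γ.dist c z ≤ Γ.dist m z := hz ▸ (Finset.le_sup hzS).trans (hc m)
  have hcz' : Γ.dist c' z ≤ Γ.dist m z := hz ▸ (Finset.le_sup hzS).trans (hc' m)
  obtain ⟨p, hp⟩ := hΓ.exists_walk_length_eq_dist c z
  obtain ⟨p', hp'⟩ := hΓ.exists_walk_length_eq_dist c' z
  obtain ⟨v, hv, hmv⟩ := hwalk (p.append p'.reverse)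
  have htriangle := hΓ.dist_triangle (u := c) (v := m) (w := c')
  rw [Γ.dist_comm (u := c) (v := m)] at htriangle
  rw [Walk.mem_support_append_iff, Walk.support_reverse, List.mem_reverse] at hv
  rcases hv with hv | hv
  · have := dist_le_two_mul_of_geodesic_meets_ball hΓ
      (dist_add_dist_of_mem_support_of_length_eq_dist hp hv) hmv hcz
    omega
  · have := dist_le_two_mul_of_geodesic_meets_ball hΓ
      (dist_add_dist_of_mem_support_of_length_eq_dist hp' hv) hmv hcz'
    omega

theorem dist_map_le_mul_dist (hΓ : Γ.Connected) (hT : T.Connected) {ψ : W → V} {L : ℕ}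
    (hψ : ∀ s t, T.Adj s t → Γ.dist (ψ s) (ψ t) ≤ L) (s t : W) :
    Γ.dist (ψ s) (ψ t) ≤ L * T.dist s t := by
  obtain ⟨p, hp⟩ := hT.exists_walk_length_eq_dist s t
  rw [← hp]
  clear hp
  induction p with
  | nil => simp
  | @cons s r t h p ih =>
    rw [Walk.length_cons]
    linarith [hΓ.dist_triangle (u := ψ s) (v := ψ r) (w := ψ t), hψ s r h]

theorem support_subset_of_isPath_of_isAcyclic (hT : T.IsAcyclic) {s t : W}
    {q : T.Walk s t} (hq : q.IsPath) (p : T.Walk s t) : q.support ⊆ p.support := by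
  classical
  have hqp : q = p.bypass := congrArg Subtype.val <|
    (hT.subsingleton_path s t).elim ⟨q, hq⟩ ⟨_, p.bypass_isPath⟩
  exact hqp ▸ p.support_bypass_subset_support

theorem exists_walk_forall_mem_support_dist_le (hT : T.Connected) {φ : V → W} {M : ℕ}
    (hφ : ∀ u v, Γ.Adj u v → T.dist (φ u) (φ v) ≤ M) {x y : V} (p : Γ.Walk x y) :
    ∃ q : T.Walk (φ x) (φ y), ∀ t ∈ q.support, ∃ v ∈ p.support, T.dist (φ v) t ≤ M := by
  classical
  induction p with
  | nil => exact ⟨.nil, by simp⟩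
  | @cons u v w h p ih =>
    obtain ⟨q, hq⟩ := ih
    obtain ⟨r, hr⟩ := hT.exists_walk_length_eq_dist (φ u) (φ v)
    refine ⟨r.append q, fun t ht ↦ ?_⟩
    rcases (Walk.mem_support_append_iff r q).mp ht with ht | ht
    · exact ⟨u, Walk.start_mem_support _, (dist_le (r.takeUntil t ht)).trans <|
        (r.length_takeUntil_le_length ht).trans <| hr ▸ hφ u v h⟩
    · obtain ⟨s, hs, hst⟩ := hq t ht
      exact ⟨s, by simp [hs], hst⟩

theorem exists_mem_support_coarsely_equidistant (hΓ : Γ.Connected) {ψ : W → V} {K L : ℕ}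
    (hψ : ∀ s t, T.Adj s t → Γ.dist (ψ s) (ψ t) ≤ L) {s t : W} (q : T.Walk s t) {x y : V}
    (hx : Γ.dist (ψ s) x ≤ K) (hy : Γ.dist (ψ t) y ≤ K) :
    ∃ r ∈ q.support, Γ.dist (ψ r) x ≤ Γ.dist (ψ r) y + 2 * (K + L) ∧
      Γ.dist (ψ r) y ≤ Γ.dist (ψ r) x + 2 * (K + L) := by
  by_cases ht : Γ.dist (ψ t) x ≤ Γ.dist (ψ t) y + K
  · exact ⟨t, q.end_mem_support, by omega, by omega⟩
  · obtain ⟨d, hd, hd₁, hd₂⟩ := q.exists_boundary_dart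
      {r | Γ.dist (ψ r) x ≤ Γ.dist (ψ r) y + K} (by simp only [Set.mem_ofPred_eq]; omega) ht
    simp only [Set.mem_ofPred_eq, not_le] at hd₁ hd₂
    have hadj := hψ _ _ d.adj
    have hx' := hΓ.dist_triangle (u := ψ d.snd) (v := ψ d.fst) (w := x)
    have hy' := hΓ.dist_triangle (u := ψ d.fst) (v := ψ d.snd) (w := y)
    rw [Γ.dist_comm (u := ψ d.snd) (v := ψ d.fst)] at hx'
    exact ⟨d.fst, q.dart_fst_mem_support_of_mem_darts hd, by omega, by omega⟩

theorem hasBottleneck_of_coarse_retract_isTree (hT : T.IsTree) (hΓ : Γ.Connected)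
    {φ : V → W} {ψ : W → V} {K L M : ℕ} (hφ : ∀ u v, Γ.Adj u v → T.dist (φ u) (φ v) ≤ M)
    (hψ : ∀ s t, T.Adj s t → Γ.dist (ψ s) (ψ t) ≤ L) (hψφ : ∀ x, Γ.dist (ψ (φ x)) x ≤ K) :
    HasBottleneck Γ (2 * (K + L) + L * M) := by
  intro x y
  obtain ⟨q, hq⟩ := hT.connected.exists_isPath (φ x) (φ y)
  obtain ⟨r, hr, hrx, hry⟩ := exists_mem_support_coarsely_equidistant hΓ hψ q (hψφ x) (hψφ y)
  refine ⟨ψ r, by omega, by omega, fun p ↦ ?_⟩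
  obtain ⟨q', hq'⟩ := exists_walk_forall_mem_support_dist_le hT.connected hφ p
  obtain ⟨v, hv, hvr⟩ := hq' r (support_subset_of_isPath_of_isAcyclic hT.isAcyclic hq q' hr)
  refine ⟨v, hv, ?_⟩
  calc Γ.dist (ψ r) v ≤ Γ.dist (ψ r) (ψ (φ v)) + Γ.dist (ψ (φ v)) v := hΓ.dist_triangle
    _ ≤ L * M + K := by
        gcongr
        · rw [dist_comm]
          exact (dist_map_le_mul_dist hΓ hT.connected hψ _ _).trans (by gcongr)
        · exact hψφ v
    _ ≤ 2 * (K + L) + L * M := by omega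

theorem finite_setOf_dist_le (hΓ : Γ.Connected) (hfin : ∀ v, (Γ.neighborSet v).Finite) (u : V)
    (n : ℕ) : {v | Γ.dist u v ≤ n}.Finite := by
  induction n with
  | zero => simp [hΓ.dist_eq_zero_iff]
  | succ n ih =>
    refine ((ih.biUnion fun v _ ↦ hfin v).union (Set.finite_singleton u)).subset fun v hv ↦ ?_
    obtain ⟨p, hp⟩ := hΓ.exists_walk_length_eq_dist u v
    by_cases hnil : p.Nil
    · exact Or.inr hnil.eq.symm
    · refine Or.inl (Set.mem_biUnion (x := p.penultimate) ?_ (p.adj_penultimate hnil))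
      have := dist_le p.dropLast
      have := p.length_dropLast_add_one hnil
      simp only [Set.mem_ofPred_eq] at hv ⊢
      omega

theorem isAcyclic_of_forall_adj_le_unique {f : V → ℕ}
    (hf : ∀ ⦃v u w⦄, Γ.Adj v u → Γ.Adj v w → f u ≤ f v → f w ≤ f v → u = w) : Γ.IsAcyclic := by
  classical
  intro a c hc
  -- Both neighbours, along a cycle, of a vertex maximizing `f` are the one that `hf` allows.
  obtain ⟨v, hv, hmax⟩ := c.support.toFinset.exists_max_image f ⟨a, by simp⟩
  rw [List.mem_toFinset] at hv
  have hle : ∀ u ∈ (c.rotate v hv).support, f u ≤ f v := fun u hu ↦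
    hmax u (List.mem_toFinset.mpr ((c.mem_support_rotate_iff _ hv).mp hu))
  have hcycle := hc.rotate hv
  exact hcycle.snd_ne_penultimate <| hf ((c.rotate v hv).adj_snd hcycle.not_nil)
    ((c.rotate v hv).adj_penultimate hcycle.not_nil).symm
    (hle _ (Walk.getVert_mem_support _ _)) (hle _ (Walk.getVert_mem_support _ _))

section Action

variable {H : Type*} [Group H] [MulAction H V]

theorem dist_smul_smul (hΓ : Γ.Connected)
    (hH : ∀ (h : H) u v, Γ.Adj u v → Γ.Adj (h • u) (h • v)) (h : H) (u v : V) :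
    Γ.dist (h • u) (h • v) = Γ.dist u v := by
  have hle : ∀ (k : H) (x y : V), Γ.dist (k • x) (k • y) ≤ Γ.dist x y := fun k x y ↦
    one_mul (Γ.dist x y) ▸
      dist_map_le_mul_dist hΓ hΓ (fun _ _ hadj ↦ (dist_eq_one_iff_adj.mpr (hH k _ _ hadj)).le) x y
  exact (hle h u v).antisymm (by simpa using hle h⁻¹ (h • u) (h • v))

theorem IsCircumcenter.smul (hΓ : Γ.Connected)
    (hH : ∀ (h : H) u v, Γ.Adj u v → Γ.Adj (h • u) (h • v)) {S : Finset V}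
    (hS : ∀ (h : H), ∀ z ∈ S, h • z ∈ S) {c : V} (hc : IsCircumcenter Γ S c) (h : H) :
    IsCircumcenter Γ S (h • c) := by
  refine fun x ↦ (Finset.sup_le fun z hz ↦ ?_).trans (hc x)
  rw [← dist_smul_smul hΓ hH h⁻¹, inv_smul_smul]
  exact Finset.le_sup (hS h⁻¹ z hz)

theorem HasBottleneck.exists_forall_dist_smul_le [Finite H] {Δ : ℕ} (hΔ : HasBottleneck Γ Δ)
    (hΓ : Γ.Connected) (hH : ∀ (h : H) u v, Γ.Adj u v → Γ.Adj (h • u) (h • v)) :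
    ∃ c, ∀ h : H, Γ.dist c (h • c) ≤ 5 * Δ := by
  have := hΓ.nonempty
  let v := Classical.arbitrary V
  have hfin : (MulAction.orbit H v).Finite := Set.finite_range _
  have hne : hfin.toFinset.Nonempty := hfin.toFinset_nonempty.mpr ⟨v, MulAction.mem_orbit_self v⟩
  have hinv : ∀ h : H, ∀ z ∈ hfin.toFinset, h • z ∈ hfin.toFinset := by
    simpa only [hfin.mem_toFinset] using fun h _ ↦ MulAction.mem_orbit_of_mem_orbit h
  obtain ⟨c, hc⟩ := exists_isCircumcenter Γ hfin.toFinset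
  exact ⟨c, fun h ↦ hΔ.dist_le_of_isCircumcenter hΓ hne hc (hc.smul hΓ hH hinv h)⟩

end Action

end CoarseGeometry

section CayleyGraph

variable {G : Type*} [Group G] {S : Set G}

theorem connected_mulCayley (hS : Subgroup.closure S = ⊤) : (mulCayley S).Connected := by
  have hstep : ∀ u, ∀ s ∈ S, (mulCayley S).Reachable u (u * s) := fun u s hs ↦ by
    by_cases hne : u = u * s
    · rw [← hne]
    · exact Adj.reachable ((mulCayley_adj S _ _).mpr ⟨hne, Or.inl (by simpa using hs)⟩)
  have hone : ∀ g : G, (mulCayley S).Reachable 1 g := fun g ↦ by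
    have hg : g ∈ Subgroup.closure S := hS ▸ Subgroup.mem_top g
    induction hg using Subgroup.closure_induction_right with
    | one => exact Reachable.refl 1
    | mul_right x _ s hs ih => exact ih.trans (hstep x s hs)
    | mul_inv_cancel x _ s hs ih => exact ih.trans (by simpa using (hstep (x * s⁻¹) s hs).symm)
  exact (connected_iff_exists_forall_reachable _).mpr ⟨1, hone⟩

theorem finite_neighborSet_mulCayley (hS : S.Finite) (v : G) :
    ((mulCayley S).neighborSet v).Finite := by
  refine ((hS.union hS.inv).image (v * ·)).subset fun u hu ↦ ⟨v⁻¹ * u, ?_, by simp⟩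
  simpa using ((mulCayley_adj S v u).mp hu).2

theorem dist_mulCayley_mul_left (hS : (mulCayley S).Connected) (g u v : G) :
    (mulCayley S).dist (g * u) (g * v) = (mulCayley S).dist u v :=
  dist_smul_smul hS (fun _ _ _ ↦ mulCayley_adj_mul_iff_right.mpr) g u v

theorem dist_mulCayley_eq_dist_one (hS : (mulCayley S).Connected) (u v : G) :
    (mulCayley S).dist u v = (mulCayley S).dist 1 (u⁻¹ * v) := by
  simpa using (dist_mulCayley_mul_left hS u⁻¹ u v).symm

theorem exists_forall_exists_mem_dist_mulCayley_le (hS : (mulCayley S).Connected) (H : Subgroup G)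
    [H.FiniteIndex] : ∃ K, ∀ x, ∃ h ∈ H, (mulCayley S).dist h x ≤ K := by
  obtain ⟨R, hR, -⟩ := H.exists_isComplement_right 1
  obtain ⟨K, hK⟩ := (hR.finite_right.image ((mulCayley S).dist 1)).bddAbove
  refine ⟨K, fun x ↦ ?_⟩
  obtain ⟨⟨h, r⟩, rfl⟩ := hR.surjective x
  refine ⟨h, h.2, ?_⟩
  rw [dist_mulCayley_eq_dist_one hS, inv_mul_cancel_left]
  exact hK (Set.mem_image_of_mem _ r.2)

variable {F : Type*} [Group F] {R : Set F}

theorem exists_forall_adj_dist_map_le (hS : (mulCayley S).Connected) (hR : R.Finite) (j : F →* G) :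
    ∃ L, ∀ s t, (mulCayley R).Adj s t → (mulCayley S).dist (j s) (j t) ≤ L := by
  obtain ⟨L, hL⟩ := ((finite_neighborSet_mulCayley hR 1).image ((mulCayley S).dist 1 ∘ j)).bddAbove
  refine ⟨L, fun s t hst ↦ ?_⟩
  rw [dist_mulCayley_eq_dist_one hS, ← map_inv, ← map_mul]
  refine hL (Set.mem_image_of_mem ((mulCayley S).dist 1 ∘ j) ?_)
  rw [mem_neighborSet, ← inv_mul_cancel s]
  exact mulCayley_adj_mul_iff_right.mpr hst

theorem exists_forall_dist_le_of_dist_map_le (hS : (mulCayley S).Connected) (hSfin : S.Finite)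
    (hR : (mulCayley R).Connected) {j : F →* G} (hj : Function.Injective j) (n : ℕ) :
    ∃ M, ∀ s t, (mulCayley S).dist (j s) (j t) ≤ n → (mulCayley R).dist s t ≤ M := by
  have hball := finite_setOf_dist_le hS (finite_neighborSet_mulCayley hSfin) 1 n
  obtain ⟨M, hM⟩ := ((hball.preimage hj.injOn).image ((mulCayley R).dist 1)).bddAbove
  refine ⟨M, fun s t hst ↦ ?_⟩
  rw [dist_mulCayley_eq_dist_one hR]
  refine hM (Set.mem_image_of_mem _ ?_)
  rwa [dist_mulCayley_eq_dist_one hS, ← map_inv, ← map_mul] at hst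

theorem exists_hasBottleneck_mulCayley (hS : (mulCayley S).Connected) (hSfin : S.Finite)
    (hR : (mulCayley R).IsTree) (hRfin : R.Finite) {j : F →* G}
    (hj : Function.Injective j) [j.range.FiniteIndex] : ∃ Δ, HasBottleneck (mulCayley S) Δ := by
  obtain ⟨K, hK⟩ := exists_forall_exists_mem_dist_mulCayley_le hS j.range
  have hretract : ∀ x, ∃ s, (mulCayley S).dist (j s) x ≤ K := by simpa using hK
  choose φ hφ using hretract
  obtain ⟨L, hL⟩ := exists_forall_adj_dist_map_le hS hRfin j
  obtain ⟨M, hM⟩ := exists_forall_dist_le_of_dist_map_le hS hSfin hR.connected hj (K + 1 + K)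
  refine ⟨_, hasBottleneck_of_coarse_retract_isTree hR hS (fun u v huv ↦ hM _ _ ?_) hL hφ⟩
  calc (mulCayley S).dist (j (φ u)) (j (φ v))
      ≤ (mulCayley S).dist (j (φ u)) v + (mulCayley S).dist v (j (φ v)) := hS.dist_triangle
    _ ≤ (mulCayley S).dist (j (φ u)) u + (mulCayley S).dist u v
          + (mulCayley S).dist v (j (φ v)) := by gcongr; exact hS.dist_triangle
    _ ≤ K + 1 + K := by
        gcongr
        · exact hφ u
        · exact (dist_eq_one_iff_adj.mpr huv).le
        · exact dist_comm.trans_le (hφ v)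

theorem exists_finite_forall_conj_mem_of_hasBottleneck (hS : (mulCayley S).Connected)
    (hSfin : S.Finite) {Δ : ℕ} (hΔ : HasBottleneck (mulCayley S) Δ) :
    ∃ B : Set G, B.Finite ∧
      ∀ H : Subgroup G, (H : Set G).Finite → ∃ g : G, ∀ h ∈ H, g * h * g⁻¹ ∈ B := by
  refine ⟨_, finite_setOf_dist_le hS (finite_neighborSet_mulCayley hSfin) 1 (5 * Δ), fun H hH ↦ ?_⟩
  have : Finite H := hH
  obtain ⟨c, hc⟩ := hΔ.exists_forall_dist_smul_le (H := H) hS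
    fun _ _ _ ↦ mulCayley_adj_mul_iff_right.mpr
  refine ⟨c⁻¹, fun h hh ↦ ?_⟩
  have hch := hc ⟨h, hh⟩
  rw [dist_mulCayley_eq_dist_one hS] at hch
  simpa [Subgroup.smul_def, mul_assoc] using hch

end CayleyGraph

section FreeGroup

variable {X : Type*}

theorem exists_eq_mul_mk_of_mulCayley_adj {v u : FreeGroup X}
    (h : (mulCayley (Set.range FreeGroup.of)).Adj v u) :
    ∃ x : X × Bool, u = v * FreeGroup.mk [x] := by
  rcases ((mulCayley_adj _ v u).mp h).2 with ⟨a, ha⟩ | ⟨a, ha⟩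
  · exact ⟨(a, true), eq_mul_of_inv_mul_eq ha.symm⟩
  · refine ⟨(a, false), ?_⟩
    have hinv : (FreeGroup.mk [(a, false)] : FreeGroup X) = (FreeGroup.of a)⁻¹ := rfl
    rw [hinv, ha]
    group

theorem toWord_mul_mk_singleton_of_norm_le [DecidableEq X] {v : FreeGroup X} {x : X × Bool}
    (h : (v * FreeGroup.mk [x]).norm ≤ v.norm) :
    (v * FreeGroup.mk [x]).toWord = v.toWord.dropLast := by
  have hword : (v * FreeGroup.mk [x]).toWord = FreeGroup.reduce (v.toWord ++ [x]) := by
    rw [FreeGroup.toWord_mul, FreeGroup.toWord_mk, FreeGroup.IsReduced.singleton.reduce_eq]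
  have hred : ¬ FreeGroup.IsReduced (v.toWord ++ [x]) := fun hred ↦ by
    rw [FreeGroup.norm, FreeGroup.norm, hword, hred.reduce_eq, List.length_append] at h
    simp at h
  have hv := FreeGroup.isReduced_toWord (x := v)
  obtain hnil | ⟨w, y, hwy⟩ := v.toWord.eq_nil_or_concat'
  · simp [hnil] at hred
  · rw [hwy] at hv hred
    have hcancel : y = (x.1, !x.2) := by
      by_contra hne
      refine hred (List.isChain_append.mpr ⟨hv, List.isChain_singleton x, ?_⟩)
      simpa using fun hfst ↦ by_contra fun hsnd ↦ hne (Prod.ext hfst (Bool.eq_not.mpr hsnd))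
    have hstep : FreeGroup.Red.Step (w ++ [y] ++ [x]) w := by
      simpa [hcancel] using FreeGroup.Red.Step.not_rev (L₁ := w) (L₂ := []) (x := x.1) (b := x.2)
    rw [hword, hwy, FreeGroup.reduce.Step.eq hstep, List.dropLast_concat]
    exact (hv.infix (List.infix_append' [] w [y])).reduce_eq

theorem isTree_mulCayley_range_of : (mulCayley (Set.range (FreeGroup.of (α := X)))).IsTree := by
  classical
  refine ⟨connected_mulCayley (FreeGroup.closure_range_of X),
    isAcyclic_of_forall_adj_le_unique (f := FreeGroup.norm)
      fun v u w huv hvw hu hw ↦ FreeGroup.toWord_injective ?_⟩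
  obtain ⟨x, rfl⟩ := exists_eq_mul_mk_of_mulCayley_adj huv
  obtain ⟨y, rfl⟩ := exists_eq_mul_mk_of_mulCayley_adj hvw
  rw [toWord_mul_mk_singleton_of_norm_le hu, toWord_mul_mk_singleton_of_norm_le hw]

theorem finite_of_fg_freeGroup [Group.FG (FreeGroup X)] : Finite X := by
  have : Group.FG (Abelianization (FreeGroup X)) :=
    Group.fg_of_surjective (f := Abelianization.of) QuotientGroup.mk_surjective
  have : AddGroup.FG (FreeAbelianGroup X) :=
    inferInstanceAs (AddGroup.FG (Additive (Abelianization (FreeGroup X))))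
  have : Module.Finite ℤ (FreeAbelianGroup X) := Module.Finite.iff_addGroup_fg.mpr this
  exact Module.Finite.finite_basis (FreeAbelianGroup.basis X)

end FreeGroup

theorem VirtuallyFree.exists_finite_forall_conj_mem {G : Type*} [Group G] [Group.FG G]
    (hG : VirtuallyFree G) :
    ∃ B : Set G, B.Finite ∧
      ∀ H : Subgroup G, (H : Set G).Finite → ∃ g : G, ∀ h ∈ H, g * h * g⁻¹ ∈ B := by
  obtain ⟨F, hF, ⟨_⟩⟩ := hG
  obtain ⟨S, hS, hSfin⟩ := Group.fg_iff.mp ‹Group.FG G›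
  have hΓ := connected_mulCayley hS
  let e := IsFreeGroup.toFreeGroup F
  have : Group.FG (FreeGroup (IsFreeGroup.Generators F)) :=
    Group.fg_of_surjective (f := e.toMonoidHom) e.surjective
  have : Finite (IsFreeGroup.Generators F) := finite_of_fg_freeGroup
  have hj : Function.Injective (F.subtype.comp e.symm.toMonoidHom) :=
    F.subtype_injective.comp e.symm.injective
  have : (F.subtype.comp e.symm.toMonoidHom).range.FiniteIndex := by
    rwa [MonoidHom.range_comp, MonoidHom.range_eq_top.mpr e.symm.surjective,
      ← MonoidHom.range_eq_map, F.range_subtype]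
  obtain ⟨Δ, hΔ⟩ := exists_hasBottleneck_mulCayley hΓ hSfin isTree_mulCayley_range_of
    (Set.finite_range _) hj
  exact exists_finite_forall_conj_mem_of_hasBottleneck hΓ hSfin hΔ

section Automorphisms

variable {G : Type*} [Group G]

/-- The group of automorphisms of `G` that agree on the set `S` with some inner automorphism. -/
def innerOn (S : Set G) : Subgroup (MulAut G) where
  carrier := {σ | ∃ g, ∀ s ∈ S, σ s = g * s * g⁻¹}
  one_mem' := ⟨1, by simp⟩
  mul_mem' := by
    rintro σ τ ⟨g, hg⟩ ⟨k, hk⟩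
    refine ⟨σ k * g, fun s hs ↦ ?_⟩
    simp [hk s hs, hg s hs, mul_assoc]
  inv_mem' := by
    rintro σ ⟨g, hg⟩
    refine ⟨σ⁻¹ g⁻¹, fun s hs ↦ ?_⟩
    apply σ.injective
    simp [hg s hs, mul_assoc]

theorem mem_innerOn {S : Set G} {σ : MulAut G} :
    σ ∈ innerOn S ↔ ∃ g, ∀ s ∈ S, σ s = g * s * g⁻¹ :=
  Iff.rfl

theorem inv_mul_mem_innerOn {S : Set G} {σ τ : MulAut G} {g k : G}
    (h : ∀ s ∈ S, g * σ s * g⁻¹ = k * τ s * k⁻¹) : σ⁻¹ * τ ∈ innerOn S := by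
  refine ⟨σ⁻¹ (k⁻¹ * g), fun s hs ↦ σ.injective ?_⟩
  have hτ : τ s = k⁻¹ * (g * σ s * g⁻¹) * k := by rw [h s hs]; group
  simp [hτ, mul_assoc]

theorem innerOn_le_of_forall_conj_mem {S S' : Set G} {g : G} (h : ∀ s ∈ S, g * s * g⁻¹ ∈ S') :
    innerOn S' ≤ innerOn S := by
  rintro σ ⟨k, hk⟩
  refine ⟨(σ g)⁻¹ * k * g, fun s hs ↦ ?_⟩
  have hσ : σ g * σ s * (σ g)⁻¹ = k * (g * s * g⁻¹) * k⁻¹ := by simpa using hk _ (h s hs)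
  calc σ s = (σ g)⁻¹ * (σ g * σ s * (σ g)⁻¹) * σ g := by group
    _ = (σ g)⁻¹ * k * g * s * ((σ g)⁻¹ * k * g)⁻¹ := by rw [hσ]; group

theorem finiteIndex_innerOn {S B : Set G} (hS : S.Finite) (hB : B.Finite)
    (h : ∀ σ : MulAut G, ∃ g : G, ∀ s ∈ S, g * σ s * g⁻¹ ∈ B) : (innerOn S).FiniteIndex := by
  choose g hg using h
  have := hS.to_subtype
  have := hB.to_subtype
  let f : MulAut G → S → B := fun σ s ↦ ⟨g σ * σ s * (g σ)⁻¹, hg σ s s.2⟩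
  have hf : ∀ σ τ, f σ = f τ → (σ : MulAut G ⧸ innerOn S) = τ := fun σ τ hστ ↦
    QuotientGroup.eq.mpr <| inv_mul_mem_innerOn fun s hs ↦
      congrArg Subtype.val (congrFun hστ ⟨s, hs⟩)
  have : Finite (MulAut G ⧸ innerOn S) := Finite.of_injective (fun q ↦ f q.out) fun p q hpq ↦ by
    simpa using hf _ _ hpq
  exact Subgroup.finiteIndex_of_finite_quotient

variable (G) in
/-- The group `Aut₀(G)` of automorphisms of `G` that are equivalent to the identity. -/
def aut0 : Subgroup (MulAut G) :=
  ⨅ H : {H : Subgroup G // (H : Set G).Finite}, innerOn (H : Set G)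

theorem mem_aut0 {σ : MulAut G} : σ ∈ aut0 G ↔ HomEquiv σ.toMonoidHom (MonoidHom.id G) := by
  have hmove : ∀ g h : G, σ h = g * h * g⁻¹ ↔ h = g⁻¹ * σ h * g := fun g h ↦ by
    rw [eq_mul_inv_iff_mul_eq, mul_assoc g⁻¹, eq_inv_mul_iff_mul_eq, eq_comm]
  simp only [aut0, Subgroup.mem_iInf, Subtype.forall, mem_innerOn, SetLike.mem_coe, HomEquiv]
  refine forall₂_congr fun H _ ↦ (Equiv.inv G).exists_congr fun g ↦ forall₂_congr fun h _ ↦ ?_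
  simpa using hmove g h

theorem finiteIndex_aut0 {B : Set G} (hB : B.Finite)
    (h : ∀ H : Subgroup G, (H : Set G).Finite → ∃ g : G, ∀ x ∈ H, g * x * g⁻¹ ∈ B) :
    (aut0 G).FiniteIndex := by
  have hfin : {K : Subgroup G | (K : Set G) ⊆ B}.Finite :=
    hB.finite_subsets.preimage SetLike.coe_injective.injOn
  have := hfin.to_subtype
  have hindex : (⨅ K : {K : Subgroup G | (K : Set G) ⊆ B}, innerOn (K : Set G)).FiniteIndex :=
    Subgroup.finiteIndex_iInf fun K ↦ finiteIndex_innerOn (hB.subset K.2) hB fun σ ↦ by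
      obtain ⟨g, hg⟩ := h (K.1.map σ.toMonoidHom) ((hB.subset K.2).image σ)
      exact ⟨g, fun x hx ↦ hg _ (Subgroup.mem_map_of_mem _ hx)⟩
  have hle : ⨅ K : {K : Subgroup G | (K : Set G) ⊆ B}, innerOn (K : Set G) ≤ aut0 G := by
    refine le_iInf fun ⟨H, hH⟩ ↦ ?_
    obtain ⟨g, hg⟩ := h H hH
    have hK : ((H.map (MulAut.conj g).toMonoidHom : Subgroup G) : Set G) ⊆ B := by
      rintro _ ⟨x, hx, rfl⟩
      exact hg x hx
    exact (iInf_le _ ⟨_, hK⟩).trans <| innerOn_le_of_forall_conj_mem (g := g) fun x hx ↦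
      Subgroup.mem_map_of_mem (MulAut.conj g).toMonoidHom hx
  exact Subgroup.finiteIndex_of_le hle

end Automorphisms

/-- In a finitely generated virtually free group, the automorphisms equivalent
to the identity form a finite index subgroup of the automorphism group. -/
theorem aut0_finiteIndex_subgroup
    (G : Type*) [Group G] (hfg : Group.FG G) (hvf : VirtuallyFree G) :
    ∃ S : Subgroup (MulAut G),
      (∀ σ : MulAut G, σ ∈ S ↔ HomEquiv σ.toMonoidHom (MonoidHom.id G)) ∧
        S.FiniteIndex := by
  obtain ⟨B, hB, hconj⟩ := hvf.exists_finite_forall_conj_mem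
  exact ⟨aut0 G, fun _ ↦ mem_aut0, finiteIndex_aut0 hB hconj⟩
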